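/- arXiv:1806.09769 — 2 statements merged into one kernel-verified Lean document; each statement's English description precedes it below -/
import Mathlib

section
/- For real numbers μ₁, μ₂ and positive variance v, the squared L₂ distance between two Gaussian densities of equal variance satisfies ∫ (N(x; μ₁, v) − N(x; μ₂, v))² dx = 2(A − N(μ₁; μ₂, 2v)), where A = 1/√(4πv) and the integral is over ℝ. -/
open MeasureTheory Real

/-- The Gaussian probability density on `ℝ` with mean `μ` and variance `v`:
`N(x; μ, v) = (2πv)^{-1/2} exp(-(x-μ)²/(2v))`. -/
noncomputable def gaussPdf (μ v x : ℝ) : ℝ :=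
    (Real.sqrt (2 * Real.pi * v))⁻¹ * Real.exp (-(x - μ) ^ 2 / (2 * v))

lemma gaussPdf_integrable (m v : ℝ) (hv : 0 < v) :
    Integrable (gaussPdf m v) ∧ ∫ x, gaussPdf m v x = 1 := by
  have e : gaussPdf m v = ProbabilityTheory.gaussianPDFReal m ⟨v, hv.le⟩ := by
    funext x
    rfl
  have hne : (⟨v, hv.le⟩ : NNReal) ≠ 0 := by
    intro h
    exact hv.ne' (congrArg NNReal.toReal h)
  rw [e]
  exact ⟨ProbabilityTheory.integrable_gaussianPDFReal _ _,
    ProbabilityTheory.integral_gaussianPDFReal_eq_one _ hne⟩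

lemma gaussPdf_mul (a b v x : ℝ) (hv : 0 < v) :
    gaussPdf a v x * gaussPdf b v x = gaussPdf b (2 * v) a * gaussPdf ((a + b) / 2) (v / 2) x := by
  unfold gaussPdf
  have h1 : (√(2 * π * v))⁻¹ * (√(2 * π * v))⁻¹ =
      (√(2 * π * (2 * v)))⁻¹ * (√(2 * π * (v / 2)))⁻¹ := by
    have hp := Real.pi_pos
    rw [← mul_inv, ← mul_inv, ← Real.sqrt_mul (by positivity), ← Real.sqrt_mul (by positivity)]
    congr 2
    ring
  rw [mul_mul_mul_comm, mul_mul_mul_comm (√(2 * π * (2 * v)))⁻¹, h1, ← Real.exp_add,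
    ← Real.exp_add]
  congr 2
  field_simp
  ring

lemma gaussPdf_mul_int (a b v : ℝ) (hv : 0 < v) :
    Integrable (fun x => gaussPdf a v x * gaussPdf b v x) ∧
      ∫ x, gaussPdf a v x * gaussPdf b v x = gaussPdf b (2 * v) a := by
  obtain ⟨h1, h2⟩ := gaussPdf_integrable ((a + b) / 2) (v / 2) (by positivity)
  simp_rw [gaussPdf_mul a b v _ hv]
  refine ⟨h1.const_mul _, ?_⟩
  rw [integral_const_mul, h2, mul_one]

lemma gaussPdf_self (a v : ℝ) : gaussPdf a (2 * v) a = 1 / √(4 * π * v) := by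
  unfold gaussPdf
  rw [show 2 * π * (2 * v) = 4 * π * v by ring]
  simp

/-- The squared L₂ distance between two Gaussian densities with common variance `v`:
`∫ (N(x; μ₁, v) - N(x; μ₂, v))² dx = 2(A - N(μ₁; μ₂, 2v))` where `A = 1/√(4πv)`. -/
theorem gauss_L2_sq_dist (μ₁ μ₂ v : ℝ) (hv : 0 < v) :
    ∫ x : ℝ, (gaussPdf μ₁ v x - gaussPdf μ₂ v x) ^ 2 =
      2 * (1 / Real.sqrt (4 * Real.pi * v) - gaussPdf μ₂ (2 * v) μ₁) := by
  obtain ⟨i1, e1⟩ := gaussPdf_mul_int μ₁ μ₁ v hv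
  obtain ⟨i2, e2⟩ := gaussPdf_mul_int μ₂ μ₂ v hv
  obtain ⟨i3, e3⟩ := gaussPdf_mul_int μ₁ μ₂ v hv
  have h : ∀ x, (gaussPdf μ₁ v x - gaussPdf μ₂ v x) ^ 2 =
      (gaussPdf μ₁ v x * gaussPdf μ₁ v x + gaussPdf μ₂ v x * gaussPdf μ₂ v x) -
        2 * (gaussPdf μ₁ v x * gaussPdf μ₂ v x) := fun x => by ring
  simp_rw [h]
  have i12 : Integrable (fun x => gaussPdf μ₁ v x * gaussPdf μ₁ v x +
      gaussPdf μ₂ v x * gaussPdf μ₂ v x) := i1.add i2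
  rw [integral_sub i12 (i3.const_mul 2), integral_add i1 i2, integral_const_mul, e1, e2,
    e3, gaussPdf_self, gaussPdf_self]
  ring
end

section
/- Let α ∈ ℝ, v > 0, Δ ∈ ℝ, and μ_{G1}, μ_{G2}, μ_{P1}, μ_{P2} ∈ ℝ with (μ_{P1} − μ_{P2})² = Δ², (μ_{G1} − μ_{G2})² = Δ², and suppose the cross terms cancel: N(μ_{G1}; μ_{P1}, 2v) + N(μ_{G2}; μ_{P2}, 2v) = N(μ_{G1}; μ_{P2}, 2v) + N(μ_{G2}; μ_{P1}, 2v). Define ρ₁ = α·N(·; μ_{G1}, v) + (1−α)·N(·; μ_{P1}, v) and ρ₄ = α·N(·; μ_{G2}, v) + (1−α)·N(·; μ_{P2}, v). Then ∫ (ρ₁ − ρ₄)² = 2((1−α)² + α²)·A·(1 − exp(−Δ²/(4v))), where A = 1/√(4πv). -/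
open MeasureTheory Real

lemma gp_mul (v a b : ℝ) (hv : 0 < v) (x : ℝ) : gaussPdf a v x * gaussPdf b v x =
    ((2 * Real.pi * v)⁻¹ * Real.exp (-(a - b) ^ 2 / (4 * v))) *
      Real.exp (-(1 / v) * (x - (a + b) / 2) ^ 2) := by
  have h2 : (Real.sqrt (2 * Real.pi * v))⁻¹ * (Real.sqrt (2 * Real.pi * v))⁻¹
      = (2 * Real.pi * v)⁻¹ := by
    rw [← mul_inv, Real.mul_self_sqrt (by positivity)]
  unfold gaussPdf
  rw [mul_mul_mul_comm, h2, ← Real.exp_add, mul_assoc (2 * Real.pi * v)⁻¹, ← Real.exp_add]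
  congr 2
  field_simp
  ring

lemma gp_integrable (v a b : ℝ) (hv : 0 < v) :
    Integrable (fun x => gaussPdf a v x * gaussPdf b v x) := by
  simp_rw [gp_mul v a b hv]
  exact ((integrable_exp_neg_mul_sq (b := 1 / v) (by positivity)).comp_sub_right
    ((a + b) / 2)).const_mul _

lemma gp_integral (v a b : ℝ) (hv : 0 < v) :
    ∫ x, gaussPdf a v x * gaussPdf b v x = gaussPdf b (2 * v) a := by
  simp_rw [gp_mul v a b hv]
  rw [integral_const_mul,
    integral_sub_right_eq_self (fun x => Real.exp (-(1 / v) * x ^ 2)) ((a + b) / 2),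
    integral_gaussian]
  unfold gaussPdf
  have e1 : 2 * (2 * v) = 4 * v := by ring
  have e2 : Real.sqrt (2 * Real.pi * (2 * v)) = 2 * Real.sqrt (Real.pi * v) := by
    rw [show 2 * Real.pi * (2 * v) = 2 ^ 2 * (Real.pi * v) by ring,
      Real.sqrt_mul (by positivity), Real.sqrt_sq (by norm_num)]
  have e3 : Real.pi / (1 / v) = Real.pi * v := by field_simp
  have e4 : Real.sqrt (Real.pi * v) * Real.sqrt (Real.pi * v) = Real.pi * v :=
    Real.mul_self_sqrt (by positivity)
  have e5 : 0 < Real.sqrt (Real.pi * v) := Real.sqrt_pos.mpr (by positivity)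
  rw [e1, e2, e3, mul_right_comm]
  congr 1
  rw [show 2 * Real.pi * v = 2 * (Real.pi * v) by ring]
  generalize hs : Real.sqrt (Real.pi * v) = s at *
  rw [← e4]
  field_simp

lemma gp_sum (v : ℝ) (hv : 0 < v) (c m : Fin 4 → ℝ) :
    ∫ x, (∑ i, c i * gaussPdf (m i) v x) ^ 2 =
      ∑ i, ∑ j, c i * c j * gaussPdf (m j) (2 * v) (m i) := by
  have h : ∀ x, (∑ i, c i * gaussPdf (m i) v x) ^ 2 =
      ∑ i, ∑ j, c i * c j * (gaussPdf (m i) v x * gaussPdf (m j) v x) := by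
    intro x
    rw [sq, Finset.sum_mul_sum]
    refine Finset.sum_congr rfl fun i _ => Finset.sum_congr rfl fun j _ => by ring
  simp_rw [h]
  have hi : ∀ i j, Integrable (fun x => c i * c j * (gaussPdf (m i) v x * gaussPdf (m j) v x)) :=
    fun i j => (gp_integrable v _ _ hv).const_mul _
  rw [integral_finsetSum _ (fun i _ => integrable_finsetSum _ fun j _ => hi i j)]
  refine Finset.sum_congr rfl fun i _ => ?_
  rw [integral_finsetSum _ (fun j _ => hi i j)]
  refine Finset.sum_congr rfl fun j _ => ?_
  rw [integral_const_mul, gp_integral v _ _ hv]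

lemma gp_symm (v a b : ℝ) : gaussPdf a v b = gaussPdf b v a := by
  unfold gaussPdf
  rw [show (b - a) ^ 2 = (a - b) ^ 2 by ring]

lemma gp_val (v a b D : ℝ) (h : (a - b) ^ 2 = D ^ 2) : gaussPdf b (2 * v) a =
    (1 / Real.sqrt (4 * Real.pi * v)) * Real.exp (-D ^ 2 / (4 * v)) := by
  unfold gaussPdf
  rw [h, show 2 * Real.pi * (2 * v) = 4 * Real.pi * v by ring,
    show 2 * (2 * v) = 4 * v by ring, one_div]

lemma gp_self (v a : ℝ) : gaussPdf a (2 * v) a = 1 / Real.sqrt (4 * Real.pi * v) := by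
  rw [gp_val v a a 0 (by ring)]
  simp

/-- Equation 16 of the paper: if the surface-point color means satisfy
`(μP1 - μP2)² = Δ²` and `(μG1 - μG2)² = Δ²` and the cross terms cancel, then for
`ρ₁ = α·N(·; μG1, v) + (1-α)·N(·; μP1, v)` and `ρ₄ = α·N(·; μG2, v) + (1-α)·N(·; μP2, v)`,
`∫ (ρ₁ - ρ₄)² = 2((1-α)² + α²)·A·(1 - exp(-Δ²/(4v)))` where `A = 1/√(4πv)`. -/
theorem mixture_L2_dist_rho1_rho4_simplified
    (α v Δ μG1 μG2 μP1 μP2 : ℝ) (hv : 0 < v)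
    (hP : (μP1 - μP2) ^ 2 = Δ ^ 2) (hG : (μG1 - μG2) ^ 2 = Δ ^ 2)
    (hcross : gaussPdf μP1 (2 * v) μG1 + gaussPdf μP2 (2 * v) μG2 =
      gaussPdf μP2 (2 * v) μG1 + gaussPdf μP1 (2 * v) μG2) :
    ∫ lam : ℝ,
        ((α * gaussPdf μG1 v lam + (1 - α) * gaussPdf μP1 v lam) -
          (α * gaussPdf μG2 v lam + (1 - α) * gaussPdf μP2 v lam)) ^ 2 =
      2 * ((1 - α) ^ 2 + α ^ 2) * (1 / Real.sqrt (4 * Real.pi * v)) *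
        (1 - Real.exp (-Δ ^ 2 / (4 * v))) := by
  have h := gp_sum v hv ![α, 1 - α, -α, -(1 - α)] ![μG1, μP1, μG2, μP2]
  simp [Fin.sum_univ_four] at h
  rw [show (fun lam : ℝ => ((α * gaussPdf μG1 v lam + (1 - α) * gaussPdf μP1 v lam) -
          (α * gaussPdf μG2 v lam + (1 - α) * gaussPdf μP2 v lam)) ^ 2) =
      fun x => (α * gaussPdf μG1 v x + (1 - α) * gaussPdf μP1 v x + -(α * gaussPdf μG2 v x) +
        (α - 1) * gaussPdf μP2 v x) ^ 2 by funext x; ring, h]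
  simp only [gp_self]
  rw [gp_symm _ μG1 μP1, gp_symm _ μG1 μP2, gp_symm _ μG2 μP1, gp_symm _ μG2 μP2,
    gp_symm _ μG1 μG2, gp_symm _ μP1 μP2, gp_val v μG1 μG2 Δ hG, gp_val v μP1 μP2 Δ hP]
  linear_combination (2 * α * (1 - α)) * hcross
end
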